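/- Assume cT < 1. Let σ_0 : (0,∞) → (0,∞) be any continuous function with C_0(K) = C_BS(K, σ_0(K)) for all K > 0, where C_0 is the call-price function of the double gamma density f_0. Then σ_0 is neither W-shaped nor (W+)-shaped: for every σ_* > 0 there do not exist points 0 < K_0 < K_1 < K_2 < K_3 < K_4 with σ_0(K_0) > σ_*, σ_0(K_1) < σ_*, σ_0(K_2) > σ_*, σ_0(K_3) < σ_*, σ_0(K_4) > σ_*. -/

import Mathlib

open MeasureTheory

/-- Mixture weight `a = (1 + μ/(2λ))^{cT}`. -/
noncomputable def mixA (c lam mu T : ℝ) : ℝ := (1 + mu / (2 * lam)) ^ (c * T)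

/-- Mixture weight `b = (1 - μ/(2λ))^{cT}`. -/
noncomputable def mixB (c lam mu T : ℝ) : ℝ := (1 - mu / (2 * lam)) ^ (c * T)

/-- `λ₊ = λ/μ + 1/2`. -/
noncomputable def lamPlus (lam mu : ℝ) : ℝ := lam / mu + 1 / 2

/-- `λ₋ = λ/μ - 1/2`. -/
noncomputable def lamMinus (lam mu : ℝ) : ℝ := lam / mu - 1 / 2

/-- The asymmetric double gamma density. -/
noncomputable def doubleGamma (c lam mu T x : ℝ) : ℝ :=
  if x < 0 then
    (mixA c lam mu T / (mixA c lam mu T + mixB c lam mu T)) *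
      (lamMinus lam mu ^ (c * T) / Real.Gamma (c * T)) * (-x) ^ (c * T - 1) *
      Real.exp (lamMinus lam mu * x)
  else if 0 < x then
    (mixB c lam mu T / (mixA c lam mu T + mixB c lam mu T)) *
      (lamPlus lam mu ^ (c * T) / Real.Gamma (c * T)) * x ^ (c * T - 1) *
      Real.exp (-lamPlus lam mu * x)
  else 0

/-- Standard normal cumulative distribution function. -/
noncomputable def stdNormalCDF (x : ℝ) : ℝ :=
  (Real.sqrt (2 * Real.pi))⁻¹ * ∫ t in Set.Iic x, Real.exp (-t ^ 2 / 2)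

/-- Black–Scholes call price with `S₀ = 1` and total volatility `σ`. -/
noncomputable def callBS (K σ : ℝ) : ℝ :=
  stdNormalCDF (-Real.log K / σ + σ / 2) - K * stdNormalCDF (-Real.log K / σ - σ / 2)

/-- Call price associated to a log-price density `f` (with `S₀ = 1`). -/
noncomputable def callPrice (f : ℝ → ℝ) (K : ℝ) : ℝ :=
  ∫ x in Set.Ioi (Real.log K), (Real.exp x - K) * f x

/-!
Let `f` be the density and `g` the Gaussian log-price density whose implied volatility is
constantly `σ_*`. Black–Scholes prices increase with the volatility, so a W-shape says that the
call price of `f - g` has signs `+, -, +, -, +` at five strikes. This price tends to `0` at both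
ends of the strike range, so by the mean value theorem its derivative, minus the tail integral of
`f - g`, alternates in sign at six strikes, and hence `f - g` has signs `-, +, -, +, -` at five
points (avoiding the origin). On each half-line `log f` is convex, which is where `cT ≤ 1` enters,
while `log g` is concave, so `{f < g}` meets each half-line in an interval. But the third point
shares its half-line with the first or with the fifth, and `f > g` somewhere in between.
-/

section Interlacing

open Set

variable {n : ℕ}

lemma strictMono_of_mem_Ioc_succ {α : Type*} [Preorder α] {x : Fin (n + 1) → α} (hx : Monotone x)
    {y : Fin n → α} (hy : ∀ i, y i ∈ Ioc (x i.castSucc) (x i.succ)) : StrictMono y :=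
  fun i j hij => (hy i).2.trans_lt <| (hx (Fin.succ_le_castSucc_iff.2 hij)).trans_lt (hy j).1

variable {x : Fin (n + 1) → ℝ} {ε : Fin n → ℝ}

lemma exists_strictMono_deriv_pos_of_sub_pos (hx : StrictMono x) {f f' : ℝ → ℝ}
    (hf : ∀ t, x 0 ≤ t → HasDerivAt f (f' t) t)
    (hε : ∀ i, 0 < ε i * (f (x i.succ) - f (x i.castSucc))) :
    ∃ y : Fin n → ℝ, StrictMono y ∧ ∀ i, x 0 < y i ∧ 0 < ε i * f' (y i) := by
  have hmvt (i : Fin n) : ∃ t ∈ Ioo (x i.castSucc) (x i.succ), 0 < ε i * f' t := by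
    have hlt : x i.castSucc < x i.succ := hx Fin.castSucc_lt_succ
    have hder (t : ℝ) (ht : x i.castSucc ≤ t) : HasDerivAt f (f' t) t :=
      hf t ((hx.monotone (Fin.zero_le _)).trans ht)
    obtain ⟨t, ht, hslope⟩ := exists_hasDerivAt_eq_slope f f' hlt
      (fun t ht => (hder t ht.1).continuousAt.continuousWithinAt) (fun t ht => hder t ht.1.le)
    refine ⟨t, ht, ?_⟩
    rw [hslope, ← mul_div_assoc]
    exact div_pos (hε i) (sub_pos.2 hlt)
  choose y hy hpos using hmvt
  exact ⟨y, strictMono_of_mem_Ioc_succ hx.monotone fun i => Ioo_subset_Ioc_self (hy i),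
    fun i => ⟨(hx.monotone (Fin.zero_le _)).trans_lt (hy i).1, hpos i⟩⟩

lemma exists_strictMono_pos_of_intervalIntegral_pos (hx : Monotone x) {g : ℝ → ℝ} {N : Set ℝ}
    (hN : volume N = 0) (hε : ∀ i, 0 < ε i * ∫ t in x i.castSucc..x i.succ, g t) :
    ∃ y : Fin n → ℝ, StrictMono y ∧ ∀ i, y i ∉ N ∧ 0 < ε i * g (y i) := by
  have hexists (i : Fin n) :
      ∃ t ∈ Ioc (x i.castSucc) (x i.succ), t ∉ N ∧ 0 < ε i * g t := by
    by_contra! hcon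
    have hnonpos : ∫ t in Ioc (x i.castSucc) (x i.succ), ε i * g t ≤ 0 := by
      refine integral_nonpos_of_ae ((ae_restrict_iff' measurableSet_Ioc).2 ?_)
      filter_upwards [measure_eq_zero_iff_ae_notMem.1 hN] with t htN ht using hcon t ht htN
    rw [integral_const_mul,
      ← intervalIntegral.integral_of_le (hx Fin.castSucc_lt_succ.le)] at hnonpos
    exact hnonpos.not_gt (hε i)
  choose y hy hpos using hexists
  exact ⟨y, strictMono_of_mem_Ioc_succ hx hy, hpos⟩

end Interlacing

section CallPrice

open Set Filter Topology

variable {f g : ℝ → ℝ}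

lemma tendsto_integral_Ioi_atBot (hg : Integrable g) :
    Tendsto (fun a => ∫ x in Ioi a, g x) atBot (𝓝 (∫ x, g x)) :=
  (aecover_Ioi tendsto_id).integral_tendsto_of_countably_generated hg

lemma tendsto_integral_Ioi_atTop (hg : Integrable g) :
    Tendsto (fun a => ∫ x in Ioi a, g x) atTop (𝓝 0) := by
  have hIic : Tendsto (fun a => ∫ x in Iic a, g x) atTop (𝓝 (∫ x, g x)) :=
    (aecover_Iic tendsto_id).integral_tendsto_of_countably_generated hg
  refine ((sub_self (∫ x, g x)) ▸ hIic.const_sub (∫ x, g x)).congr fun a => ?_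
  rw [← intervalIntegral.integral_Iic_add_Ioi hg.integrableOn hg.integrableOn, add_sub_cancel_left]

lemma callPrice_eq_integral_sub_mul (hg : Integrable g)
    (heg : Integrable fun x => Real.exp x * g x) (K : ℝ) :
    callPrice g K = (∫ x in Ioi (Real.log K), Real.exp x * g x)
      - K * ∫ x in Ioi (Real.log K), g x := by
  simp_rw [callPrice, sub_mul]
  rw [integral_sub heg.integrableOn (hg.const_mul K).integrableOn, integral_const_mul]

lemma callPrice_sub (hf : Integrable f) (hef : Integrable fun x => Real.exp x * f x)
    (hg : Integrable g) (heg : Integrable fun x => Real.exp x * g x) (K : ℝ) :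
    callPrice (f - g) K = callPrice f K - callPrice g K := by
  have hint {h : ℝ → ℝ} (hh : Integrable h) (heh : Integrable fun x => Real.exp x * h x) :
      IntegrableOn (fun x => (Real.exp x - K) * h x) (Ioi (Real.log K)) := by
    simp_rw [sub_mul]
    exact (heh.sub (hh.const_mul K)).integrableOn
  simp_rw [callPrice, Pi.sub_apply, mul_sub]
  exact integral_sub (hint hf hef) (hint hg heg)

lemma callPrice_sub_callPrice_add (hg : Integrable g)
    (heg : Integrable fun x => Real.exp x * g x) (K L : ℝ) :
    callPrice g L - callPrice g K + (L - K) * ∫ x in Ioi (Real.log K), g x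
      = ∫ x in Real.log K..Real.log L, (L - Real.exp x) * g x := by
  simp_rw [sub_mul]
  rw [intervalIntegral.integral_sub (hg.const_mul L).intervalIntegrable heg.intervalIntegrable,
    intervalIntegral.integral_const_mul,
    ← intervalIntegral.integral_Ioi_sub_Ioi' hg.integrableOn hg.integrableOn,
    ← intervalIntegral.integral_Ioi_sub_Ioi' heg.integrableOn heg.integrableOn,
    callPrice_eq_integral_sub_mul hg heg, callPrice_eq_integral_sub_mul hg heg]
  ring

lemma abs_sub_exp_le_of_mem_uIoc {K L x : ℝ} (hK : 0 < K) (hL : 0 < L)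
    (hx : x ∈ uIoc (Real.log K) (Real.log L)) : |L - Real.exp x| ≤ |L - K| := by
  have hmem := Real.exp_monotone.mapsTo_uIcc (uIoc_subset_uIcc hx)
  rw [Real.exp_log hK, Real.exp_log hL] at hmem
  exact abs_sub_right_of_mem_uIcc hmem

lemma norm_callPrice_sub_callPrice_add_le (hg : Integrable g)
    (heg : Integrable fun x => Real.exp x * g x) {K L : ℝ} (hK : 0 < K) (hL : 0 < L) :
    ‖callPrice g L - callPrice g K + (L - K) * ∫ x in Ioi (Real.log K), g x‖
      ≤ ‖(L - K) * ∫ x in Real.log K..Real.log L, ‖g x‖‖ := by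
  rw [callPrice_sub_callPrice_add hg heg, ← intervalIntegral.integral_const_mul]
  refine (intervalIntegral.norm_integral_le_abs_of_norm_le (ae_restrict_of_forall_mem
    measurableSet_uIoc fun x hx => ?_) (hg.norm.const_mul |L - K|).intervalIntegrable).trans_eq ?_
  · rw [norm_mul]
    exact mul_le_mul_of_nonneg_right (abs_sub_exp_le_of_mem_uIoc hK hL hx) (norm_nonneg _)
  · simp only [intervalIntegral.integral_const_mul, abs_mul, abs_abs, Real.norm_eq_abs]

lemma hasDerivAt_callPrice (hg : Integrable g) (heg : Integrable fun x => Real.exp x * g x)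
    {K : ℝ} (hK : 0 < K) :
    HasDerivAt (callPrice g) (-∫ x in Ioi (Real.log K), g x) K := by
  have hzero : Tendsto (fun L => ∫ x in Real.log K..Real.log L, ‖g x‖) (𝓝 K) (𝓝 0) := by
    have hcont := intervalIntegral.continuous_primitive
      (fun a b => hg.norm.intervalIntegrable (a := a) (b := b)) (Real.log K)
    simpa [Function.comp_def] using (hcont.tendsto _).comp (Real.continuousAt_log hK.ne').tendsto
  have hsmall : (fun L => (L - K) * ∫ x in Real.log K..Real.log L, ‖g x‖)
      =o[𝓝 K] fun L => L - K := by
    simpa using (Asymptotics.isBigO_refl (fun L : ℝ => L - K) (𝓝 K)).mul_isLittleO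
      ((Asymptotics.isLittleO_one_iff ℝ).2 hzero)
  refine hasDerivAt_iff_isLittleO.2 <| (Asymptotics.IsBigO.of_bound' ?_).trans_isLittleO hsmall
  filter_upwards [Ioi_mem_nhds hK] with L hL
  simpa using norm_callPrice_sub_callPrice_add_le hg heg hK hL

lemma tendsto_callPrice_atTop (heg : Integrable fun x => Real.exp x * g x) :
    Tendsto (callPrice g) atTop (𝓝 0) := by
  refine squeeze_zero_norm' ?_ ((tendsto_integral_Ioi_atTop heg.norm).comp Real.tendsto_log_atTop)
  filter_upwards [eventually_gt_atTop 0] with K hK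
  refine norm_integral_le_of_norm_le heg.norm.integrableOn
    (ae_restrict_of_forall_mem measurableSet_Ioi fun x hx => ?_)
  have hKx : K < Real.exp x := (Real.log_lt_iff_lt_exp hK).1 hx
  rw [norm_mul, norm_mul]
  gcongr
  rw [Real.norm_of_nonneg (sub_pos.2 hKx).le, Real.norm_of_nonneg (Real.exp_pos x).le]
  linarith

lemma tendsto_callPrice_nhdsGT_zero (hg : Integrable g)
    (heg : Integrable fun x => Real.exp x * g x) :
    Tendsto (callPrice g) (𝓝[>] 0) (𝓝 (∫ x, Real.exp x * g x)) := by
  have hlog := Real.tendsto_log_nhdsGT_zero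
  have hK : Tendsto (fun K : ℝ => K) (𝓝[>] 0) (𝓝 0) := tendsto_id.mono_left nhdsWithin_le_nhds
  have := ((tendsto_integral_Ioi_atBot heg).comp hlog).sub
    (hK.mul ((tendsto_integral_Ioi_atBot hg).comp hlog))
  rw [zero_mul, sub_zero] at this
  exact this.congr fun K => (callPrice_eq_integral_sub_mul hg heg K).symm

lemma exists_mem_Ioo_callPrice_lt (hg : Integrable g)
    (heg : Integrable fun x => Real.exp x * g x) (h0 : ∫ x, Real.exp x * g x = 0)
    {K r : ℝ} (hK : 0 < K) (hr : 0 < r) : ∃ u ∈ Ioo 0 K, callPrice g u < r := by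
  have hlim := tendsto_callPrice_nhdsGT_zero hg heg
  rw [h0] at hlim
  exact ((eventually_mem_set.2 (Ioo_mem_nhdsGT hK)).and (hlim.eventually (gt_mem_nhds hr))).exists

lemma exists_gt_mul_callPrice_lt (heg : Integrable fun x => Real.exp x * g x) (ε K : ℝ) {r : ℝ}
    (hr : 0 < r) : ∃ v > K, ε * callPrice g v < r := by
  have hlim := (tendsto_callPrice_atTop heg).const_mul ε
  rw [mul_zero] at hlim
  exact ((eventually_gt_atTop K).and (hlim.eventually (gt_mem_nhds hr))).exists

lemma exists_extension_callPrice_zigzag (hg : Integrable g)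
    (heg : Integrable fun x => Real.exp x * g x) (h0 : ∫ x, Real.exp x * g x = 0)
    {n : ℕ} {K : Fin (n + 1) → ℝ} (hK : StrictMono K) (hK0 : 0 < K 0)
    (hsign : ∀ i : Fin (n + 1), 0 < (-1) ^ (i : ℕ) * callPrice g (K i)) :
    ∃ L : Fin (n + 3) → ℝ, StrictMono L ∧ 0 < L 0 ∧
      ∀ i : Fin (n + 2),
        0 < (-1) ^ (i : ℕ) * (callPrice g (L i.succ) - callPrice g (L i.castSucc)) := by
  obtain ⟨u, hu, hgu⟩ := exists_mem_Ioo_callPrice_lt hg heg h0 hK0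
    (by simpa using hsign 0 : 0 < callPrice g (K 0))
  obtain ⟨v, hv, hgv⟩ := exists_gt_mul_callPrice_lt heg ((-1) ^ n) (K (Fin.last n))
    (hsign (Fin.last n))
  have hstep (i : Fin (n + 2)) :
      let L : Fin (n + 3) → ℝ := Fin.cons u (Fin.snoc K v : Fin (n + 2) → ℝ)
      L i.castSucc < L i.succ ∧
        0 < (-1) ^ (i : ℕ) * (callPrice g (L i.succ) - callPrice g (L i.castSucc)) := by
    dsimp only
    cases i using Fin.cases with
    | zero =>
      rw [Fin.castSucc_zero, Fin.cons_zero, Fin.cons_succ, ← Fin.castSucc_zero, Fin.snoc_castSucc]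
      exact ⟨hu.2, by simpa using hgu⟩
    | succ j =>
      rw [← Fin.succ_castSucc, Fin.cons_succ, Fin.cons_succ, Fin.snoc_castSucc, Fin.val_succ,
        pow_succ]
      cases j using Fin.lastCases with
      | last =>
        rw [Fin.succ_last, Fin.snoc_last]
        rw [Fin.val_last] at hgv ⊢
        exact ⟨hv, by linarith⟩
      | cast k =>
        rw [Fin.succ_castSucc, Fin.snoc_castSucc]
        have hk := hsign k.castSucc
        have hk1 := hsign k.succ
        rw [Fin.val_castSucc] at hk ⊢
        rw [Fin.val_succ, pow_succ] at hk1
        exact ⟨hK Fin.castSucc_lt_succ, by linarith⟩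
  exact ⟨_, Fin.strictMono_iff_lt_succ.2 fun i => (hstep i).1, hu.1, fun i => (hstep i).2⟩

lemma exists_alternating_of_callPrice_alternating (hg : Integrable g)
    (heg : Integrable fun x => Real.exp x * g x) (h0 : ∫ x, Real.exp x * g x = 0)
    {N : Set ℝ} (hN : volume N = 0) {n : ℕ} {K : Fin (n + 1) → ℝ} (hK : StrictMono K)
    (hK0 : 0 < K 0) (hsign : ∀ i : Fin (n + 1), 0 < (-1) ^ (i : ℕ) * callPrice g (K i)) :
    ∃ x : Fin (n + 1) → ℝ, StrictMono x ∧ ∀ i, x i ∉ N ∧ (-1) ^ (i : ℕ) * g (x i) < 0 := by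
  obtain ⟨L, hL, hL0, hzigzag⟩ := exists_extension_callPrice_zigzag hg heg h0 hK hK0 hsign
  obtain ⟨y, hy, htail⟩ := exists_strictMono_deriv_pos_of_sub_pos hL
    (fun t ht => hasDerivAt_callPrice hg heg (hL0.trans_le ht)) hzigzag
  have hlog : StrictMono fun i => Real.log (y i) := fun i j hij =>
    Real.log_lt_log (hL0.trans (htail i).1) (hy hij)
  obtain ⟨x, hx, hgx⟩ := exists_strictMono_pos_of_intervalIntegral_pos hlog.monotone (g := g) hN
    (ε := fun i => -(-1) ^ (i : ℕ)) fun i => by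
      have hleft := (htail i.castSucc).2
      have hright := (htail i.succ).2
      rw [Fin.val_castSucc] at hleft
      rw [Fin.val_succ, pow_succ] at hright
      rw [← intervalIntegral.integral_Ioi_sub_Ioi' hg.integrableOn hg.integrableOn]
      linarith
  exact ⟨x, hx, fun i => ⟨(hgx i).1, by linarith [(hgx i).2]⟩⟩

end CallPrice

section BlackScholes

open Set Filter Topology ProbabilityTheory
open scoped NNReal

lemma exp_mul_gaussianPDFReal (t m : ℝ) {v : ℝ≥0} (hv : v ≠ 0) (x : ℝ) :
    Real.exp (t * x) * gaussianPDFReal m v x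
      = Real.exp (t * m + t ^ 2 * v / 2) * gaussianPDFReal (m + t * v) v x := by
  have := NNReal.coe_ne_zero.2 hv
  rw [gaussianPDFReal, gaussianPDFReal, mul_left_comm, mul_left_comm (Real.exp (t * m + _)),
    ← Real.exp_add, ← Real.exp_add]
  congr 2
  field_simp
  ring

lemma concaveOn_log_gaussianPDFReal (m : ℝ) {v : ℝ≥0} (hv : v ≠ 0) :
    ConcaveOn ℝ univ fun x => Real.log (gaussianPDFReal m v x) := by
  have : (0 : ℝ) < v := NNReal.coe_pos.2 (pos_iff_ne_zero.2 hv)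
  have hsq : ConvexOn ℝ univ fun x : ℝ => (x - m) ^ 2 := by
    simpa [sub_eq_add_neg, Function.comp_def] using even_two.convexOn_pow.translate_left (-m)
  refine ((hsq.smul (inv_nonneg.2 (by positivity : 0 ≤ 2 * (v : ℝ)))).neg.add_const
    (Real.log (√(2 * Real.pi * v))⁻¹)).congr fun x _ => ?_
  rw [gaussianPDFReal, Real.log_mul (by positivity) (Real.exp_pos _).ne', Real.log_exp]
  simp only [Pi.add_apply, Pi.neg_apply, smul_eq_mul]
  ring

lemma stdNormalCDF_eq_integral (x : ℝ) :
    stdNormalCDF x = ∫ t in Iic x, gaussianPDFReal 0 1 t := by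
  simp [stdNormalCDF, gaussianPDFReal, integral_const_mul]

lemma stdNormalCDF_eq_cdf : stdNormalCDF = cdf (gaussianReal 0 1) := by
  ext x
  rw [stdNormalCDF_eq_integral, cdf_eq_real, measureReal_def,
    gaussianReal_apply_eq_integral 0 one_ne_zero,
    ENNReal.toReal_ofReal (integral_nonneg (gaussianPDFReal_nonneg 0 1))]

lemma hasDerivAt_stdNormalCDF (x : ℝ) : HasDerivAt stdNormalCDF (gaussianPDFReal 0 1 x) x := by
  have hint := integrable_gaussianPDFReal 0 1
  have hcont : Continuous (gaussianPDFReal 0 1) := by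
    rw [gaussianPDFReal_def]
    fun_prop
  have hFTC := intervalIntegral.integral_hasDerivAt_right
    (hint.intervalIntegrable (a := 0) (b := x)) (hcont.stronglyMeasurableAtFilter _ _)
    hcont.continuousAt
  refine (hFTC.const_add (∫ t in Iic (0 : ℝ), gaussianPDFReal 0 1 t)).congr_of_eventuallyEq
    (Eventually.of_forall fun y => ?_)
  beta_reduce
  rw [stdNormalCDF_eq_integral,
    ← intervalIntegral.integral_Iic_sub_Iic hint.integrableOn hint.integrableOn, add_sub_cancel]

/-- Density of the log-price `-s²/2 + s Z`, `Z` standard normal, in the Black–Scholes model with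
total volatility `s` and `S₀ = 1`. -/
noncomputable def bsLogDensity (s : ℝ) : ℝ → ℝ :=
  gaussianPDFReal (-(s ^ 2 / 2)) (.mk (s ^ 2) (sq_nonneg s))

variable {s : ℝ}

lemma nnreal_sq_ne_zero (hs : s ≠ 0) : (.mk (s ^ 2) (sq_nonneg s) : ℝ≥0) ≠ 0 :=
  NNReal.coe_ne_zero.1 (pow_ne_zero 2 hs)

lemma integral_Ioi_gaussianPDFReal_sq (hs : 0 < s) (m k : ℝ) :
    ∫ x in Ioi k, gaussianPDFReal m (.mk (s ^ 2) (sq_nonneg s)) x = stdNormalCDF ((m - k) / s) := by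
  have hderiv (x : ℝ) : HasDerivAt (fun y => -stdNormalCDF ((m - y) / s))
      (gaussianPDFReal m (.mk (s ^ 2) (sq_nonneg s)) x) x := by
    refine ((hasDerivAt_stdNormalCDF ((m - x) / s)).comp x
      (((hasDerivAt_id x).const_sub m).div_const s)).neg.congr_deriv ?_
    simp only [gaussianPDFReal, NNReal.coe_one, NNReal.coe_mk, mul_one, sub_zero,
      Real.sqrt_mul (by positivity : 0 ≤ 2 * Real.pi), Real.sqrt_sq hs.le, mul_inv]
    rw [show -((m - x) / s) ^ 2 / 2 = -(x - m) ^ 2 / (2 * s ^ 2) by field_simp; ring]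
    ring
  have hlim : Tendsto (fun y => -stdNormalCDF ((m - y) / s)) atTop (𝓝 0) := by
    have hsub : Tendsto (fun y : ℝ => m - y) atTop atBot := by
      simpa only [sub_eq_add_neg] using
        tendsto_atBot_add_const_left atTop m tendsto_neg_atTop_atBot
    rw [stdNormalCDF_eq_cdf, ← neg_zero]
    exact ((tendsto_cdf_atBot _).comp (hsub.atBot_div_const hs)).neg
  rw [integral_Ioi_of_hasDerivAt_of_tendsto' (fun x _ => hderiv x)
    (integrable_gaussianPDFReal _ _).integrableOn hlim, zero_sub, neg_neg]

lemma exp_mul_bsLogDensity (hs : s ≠ 0) (x : ℝ) :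
    Real.exp x * bsLogDensity s x = gaussianPDFReal (s ^ 2 / 2) (.mk (s ^ 2) (sq_nonneg s)) x := by
  have := exp_mul_gaussianPDFReal 1 (-(s ^ 2 / 2)) (nnreal_sq_ne_zero hs) x
  simp only [one_mul, one_pow, NNReal.coe_mk, neg_add_cancel, Real.exp_zero] at this
  rw [bsLogDensity, this]
  congr 1
  ring

lemma integrable_bsLogDensity (s : ℝ) : Integrable (bsLogDensity s) :=
  integrable_gaussianPDFReal _ _

lemma integrable_exp_mul_bsLogDensity (hs : s ≠ 0) :
    Integrable fun x => Real.exp x * bsLogDensity s x := by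
  simp_rw [exp_mul_bsLogDensity hs]
  exact integrable_gaussianPDFReal _ _

lemma integral_exp_mul_bsLogDensity (hs : s ≠ 0) : ∫ x, Real.exp x * bsLogDensity s x = 1 := by
  simp_rw [exp_mul_bsLogDensity hs]
  exact integral_gaussianPDFReal_eq_one _ (nnreal_sq_ne_zero hs)

lemma callPrice_bsLogDensity (hs : 0 < s) (K : ℝ) : callPrice (bsLogDensity s) K = callBS K s := by
  rw [callPrice_eq_integral_sub_mul (integrable_bsLogDensity s)
    (integrable_exp_mul_bsLogDensity hs.ne')]
  simp_rw [exp_mul_bsLogDensity hs.ne', bsLogDensity, integral_Ioi_gaussianPDFReal_sq hs]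
  rw [callBS]
  congr 3 <;> field_simp <;> ring

lemma mul_gaussianPDFReal_sub_half {K : ℝ} (hK : 0 < K) (hs : s ≠ 0) :
    K * gaussianPDFReal 0 1 (-Real.log K / s - s / 2)
      = gaussianPDFReal 0 1 (-Real.log K / s + s / 2) := by
  nth_rewrite 1 [← Real.exp_log hK]
  simp only [gaussianPDFReal, NNReal.coe_one]
  rw [mul_left_comm, ← Real.exp_add]
  congr 2
  field_simp
  ring

lemma hasDerivAt_callBS {K : ℝ} (hK : 0 < K) (hs : s ≠ 0) :
    HasDerivAt (callBS K) (gaussianPDFReal 0 1 (-Real.log K / s + s / 2)) s := by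
  have hdiv : HasDerivAt (fun σ : ℝ => -Real.log K / σ) (Real.log K / s ^ 2) s := by
    simpa [div_eq_mul_inv] using (hasDerivAt_inv hs).const_mul (-Real.log K)
  have hhalf : HasDerivAt (fun σ : ℝ => σ / 2) (1 / 2) s := (hasDerivAt_id s).div_const 2
  refine (((hasDerivAt_stdNormalCDF _).comp s (hdiv.add hhalf)).sub
    (((hasDerivAt_stdNormalCDF _).comp s (hdiv.sub hhalf)).const_mul K)).congr_deriv ?_
  simp only [Pi.add_apply, Pi.sub_apply]
  rw [← mul_assoc, mul_gaussianPDFReal_sub_half hK hs]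
  ring

lemma strictMonoOn_callBS {K : ℝ} (hK : 0 < K) : StrictMonoOn (callBS K) (Ioi 0) := by
  refine strictMonoOn_of_deriv_pos (convex_Ioi 0)
    (fun s hs => (hasDerivAt_callBS hK (ne_of_gt hs)).continuousAt.continuousWithinAt)
    fun s hs => ?_
  rw [interior_Ioi] at hs
  rw [(hasDerivAt_callBS hK (ne_of_gt hs)).deriv]
  exact gaussianPDFReal_pos 0 1 _ one_ne_zero

end BlackScholes

section LogConvexDensity

open Set ProbabilityTheory

lemma convex_setOf_lt_of_convexOn_log_of_concaveOn_log {E : Type*} [AddCommGroup E] [Module ℝ E]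
    {S : Set E} {f g : E → ℝ} (hf : ConvexOn ℝ S fun x => Real.log (f x))
    (hg : ConcaveOn ℝ S fun x => Real.log (g x)) (hfpos : ∀ x ∈ S, 0 < f x)
    (hgpos : ∀ x ∈ S, 0 < g x) : Convex ℝ {x ∈ S | f x < g x} := by
  convert (hf.sub hg).convex_lt 0 using 1
  ext x
  refine and_congr_right fun hx => ?_
  rw [Pi.sub_apply, sub_neg, Real.log_lt_log_iff (hfpos x hx) (hgpos x hx)]

lemma convex_setOf_lt_bsLogDensity {S : Set ℝ} {f : ℝ → ℝ}
    (hf : ConvexOn ℝ S fun x => Real.log (f x)) (hfpos : ∀ x ∈ S, 0 < f x) {s : ℝ} (hs : s ≠ 0) :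
    Convex ℝ {x ∈ S | f x < bsLogDensity s x} :=
  convex_setOf_lt_of_convexOn_log_of_concaveOn_log hf
    ((concaveOn_log_gaussianPDFReal _ (nnreal_sq_ne_zero hs)).subset (subset_univ S) hf.1) hfpos
    fun x _ => gaussianPDFReal_pos _ _ x (nnreal_sq_ne_zero hs)

variable {f : ℝ → ℝ} {m s : ℝ}

lemma not_alternating_sub_bsLogDensity (hleft : ConvexOn ℝ (Iio m) fun x => Real.log (f x))
    (hright : ConvexOn ℝ (Ioi m) fun x => Real.log (f x)) (hpos : ∀ x ≠ m, 0 < f x) (hs : s ≠ 0)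
    {x : Fin 5 → ℝ} (hx : StrictMono x) (hxm : x 2 ≠ m) :
    ¬∀ i : Fin 5, (-1) ^ (i : ℕ) * (f - bsLogDensity s) (x i) < 0 := by
  intro hsign
  have h01 : x 0 < x 1 := hx (by decide)
  have h12 : x 1 < x 2 := hx (by decide)
  have h23 : x 2 < x 3 := hx (by decide)
  have h34 : x 3 < x 4 := hx (by decide)
  have hsign' : f (x 0) < bsLogDensity s (x 0) ∧ bsLogDensity s (x 1) < f (x 1) ∧
      f (x 2) < bsLogDensity s (x 2) ∧ bsLogDensity s (x 3) < f (x 3) ∧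
      f (x 4) < bsLogDensity s (x 4) := by
    simpa [Fin.forall_fin_succ, Odd.neg_one_pow, Even.neg_one_pow, Nat.odd_iff,
      Nat.even_iff] using hsign
  obtain ⟨hf0, hf1, hf2, hf3, hf4⟩ := hsign'
  rcases hxm.lt_or_gt with hlt | hgt
  · have hconv := convex_setOf_lt_bsLogDensity hleft (fun x hx => hpos x (ne_of_lt hx)) hs
    have hmem := hconv.ordConnected.out ⟨(h01.trans h12).trans hlt, hf0⟩ ⟨hlt, hf2⟩
      ⟨h01.le, h12.le⟩
    exact hf1.not_gt hmem.2
  · have hconv := convex_setOf_lt_bsLogDensity hright (fun x hx => hpos x (ne_of_gt hx)) hs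
    have hmem := hconv.ordConnected.out ⟨hgt, hf2⟩ ⟨hgt.trans (h23.trans h34), hf4⟩
      ⟨h23.le, h34.le⟩
    exact hf3.not_gt hmem.2

lemma callPrice_sub_bsLogDensity (hf : Integrable f)
    (hef : Integrable fun x => Real.exp x * f x) (hs : 0 < s) (K : ℝ) :
    callPrice (f - bsLogDensity s) K = callPrice f K - callBS K s := by
  rw [callPrice_sub hf hef (integrable_bsLogDensity s) (integrable_exp_mul_bsLogDensity hs.ne'),
    callPrice_bsLogDensity hs]

lemma exists_alternating_sub_bsLogDensity (hf : Integrable f)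
    (hef : Integrable fun x => Real.exp x * f x) (hmean : ∫ x, Real.exp x * f x = 1) (hs : 0 < s)
    {N : Set ℝ} (hN : volume N = 0) {n : ℕ} {K : Fin (n + 1) → ℝ} (hK : StrictMono K)
    (hK0 : 0 < K 0)
    (hsign : ∀ i : Fin (n + 1), 0 < (-1) ^ (i : ℕ) * (callPrice f (K i) - callBS (K i) s)) :
    ∃ x : Fin (n + 1) → ℝ, StrictMono x ∧
      ∀ i, x i ∉ N ∧ (-1) ^ (i : ℕ) * (f - bsLogDensity s) (x i) < 0 := by
  have hexp : (fun x => Real.exp x * (f - bsLogDensity s) x)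
      = (fun x => Real.exp x * f x) - fun x => Real.exp x * bsLogDensity s x := by
    ext x
    simp [mul_sub]
  have hebs := integrable_exp_mul_bsLogDensity hs.ne'
  refine exists_alternating_of_callPrice_alternating (hf.sub (integrable_bsLogDensity s)) ?_ ?_ hN
    hK hK0 fun i => (callPrice_sub_bsLogDensity hf hef hs (K i)).symm ▸ hsign i
  · rw [hexp]
    exact hef.sub hebs
  · rw [hexp, integral_sub' hef hebs, hmean, integral_exp_mul_bsLogDensity hs.ne', sub_self]

theorem impliedVol_no_W_shape_of_convexOn_log (hf : Integrable f)
    (hef : Integrable fun x => Real.exp x * f x) (hmean : ∫ x, Real.exp x * f x = 1)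
    (hleft : ConvexOn ℝ (Iio m) fun x => Real.log (f x))
    (hright : ConvexOn ℝ (Ioi m) fun x => Real.log (f x)) (hpos : ∀ x ≠ m, 0 < f x)
    {σ : ℝ → ℝ} (hσ : ∀ K, 0 < K → 0 < σ K)
    (hIV : ∀ K, 0 < K → callPrice f K = callBS K (σ K)) (hs : 0 < s) :
    ¬∃ K0 K1 K2 K3 K4 : ℝ, 0 < K0 ∧ K0 < K1 ∧ K1 < K2 ∧ K2 < K3 ∧ K3 < K4 ∧
      s < σ K0 ∧ σ K1 < s ∧ s < σ K2 ∧ σ K3 < s ∧ s < σ K4 := by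
  rintro ⟨K0, K1, K2, K3, K4, hK0, h01, h12, h23, h34, hσ0, hσ1, hσ2, hσ3, hσ4⟩
  have habove {K : ℝ} (hK : 0 < K) (hsσ : s < σ K) : callBS K s < callPrice f K :=
    hIV K hK ▸ strictMonoOn_callBS hK hs (hσ K hK) hsσ
  have hbelow {K : ℝ} (hK : 0 < K) (hσs : σ K < s) : callPrice f K < callBS K s :=
    hIV K hK ▸ strictMonoOn_callBS hK (hσ K hK) hs hσs
  have hK1 := hK0.trans h01
  have hK2 := hK1.trans h12
  have hK3 := hK2.trans h23
  have hK4 := hK3.trans h34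
  have hstrict : StrictMono ![K0, K1, K2, K3, K4] := by
    simp [Fin.strictMono_iff_lt_succ, Fin.forall_fin_succ, *]
  have hsign : ∀ i : Fin 5, 0 < (-1) ^ (i : ℕ) *
      (callPrice f (![K0, K1, K2, K3, K4] i) - callBS (![K0, K1, K2, K3, K4] i) s) := by
    simp [Fin.forall_fin_succ, Odd.neg_one_pow, Nat.odd_iff, Nat.even_iff,
      habove hK0 hσ0, hbelow hK1 hσ1, habove hK2 hσ2, hbelow hK3 hσ3, habove hK4 hσ4]
  obtain ⟨x, hx, hxsign⟩ := exists_alternating_sub_bsLogDensity hf hef hmean hs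
    (measure_singleton m) hstrict hK0 hsign
  exact not_alternating_sub_bsLogDensity hleft hright hpos hs.ne' hx (hxsign 2).1
    fun i => (hxsign i).2

end LogConvexDensity

section GammaDensity

open Set ProbabilityTheory

variable {a r : ℝ}

lemma gammaPDFReal_of_neg {x : ℝ} (hx : x < 0) : gammaPDFReal a r x = 0 :=
  if_neg hx.not_ge

lemma integrable_gammaPDFReal (ha : 0 < a) (hr : 0 < r) : Integrable (gammaPDFReal a r) :=
  (lintegral_ofReal_ne_top_iff_integrable (measurable_gammaPDFReal a r).aestronglyMeasurable
    (ae_of_all _ (gammaPDFReal_nonneg ha hr))).1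
    ((lintegral_gammaPDF_eq_one ha hr).trans_ne ENNReal.one_ne_top)

lemma integral_gammaPDFReal_eq_one (ha : 0 < a) (hr : 0 < r) : ∫ x, gammaPDFReal a r x = 1 := by
  rw [integral_eq_lintegral_of_nonneg_ae (ae_of_all _ (gammaPDFReal_nonneg ha hr))
    (measurable_gammaPDFReal a r).aestronglyMeasurable]
  exact congrArg ENNReal.toReal (lintegral_gammaPDF_eq_one ha hr)

lemma exp_mul_gammaPDFReal (a : ℝ) {t : ℝ} (hr : 0 ≤ r) (ht : t < r) (x : ℝ) :
    Real.exp (t * x) * gammaPDFReal a r x = (r / (r - t)) ^ a * gammaPDFReal a (r - t) x := by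
  have hrt : 0 < r - t := sub_pos.2 ht
  have hne : (r - t) ^ a ≠ 0 := (Real.rpow_pos_of_pos hrt a).ne'
  have hexp : Real.exp (-((r - t) * x)) = Real.exp (t * x) * Real.exp (-(r * x)) := by
    rw [← Real.exp_add]
    ring_nf
  rw [gammaPDFReal, gammaPDFReal, Real.div_rpow hr hrt.le]
  split_ifs
  · rw [hexp]
    field_simp
  · simp

lemma integrable_exp_mul_gammaPDFReal (ha : 0 < a) (hr : 0 < r) {t : ℝ} (ht : t < r) :
    Integrable fun x => Real.exp (t * x) * gammaPDFReal a r x := by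
  simp_rw [exp_mul_gammaPDFReal a hr.le ht]
  exact (integrable_gammaPDFReal ha (sub_pos.2 ht)).const_mul _

lemma integral_exp_mul_gammaPDFReal (ha : 0 < a) (hr : 0 < r) {t : ℝ} (ht : t < r) :
    ∫ x, Real.exp (t * x) * gammaPDFReal a r x = (r / (r - t)) ^ a := by
  simp_rw [exp_mul_gammaPDFReal a hr.le ht]
  rw [integral_const_mul, integral_gammaPDFReal_eq_one ha (sub_pos.2 ht), mul_one]

lemma convexOn_log_gammaPDFReal (ha : 0 < a) (ha1 : a ≤ 1) (hr : 0 < r) :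
    ConvexOn ℝ (Ioi 0) fun x => Real.log (gammaPDFReal a r x) := by
  have hlog := strictConcaveOn_log_Ioi.concaveOn.neg.smul (sub_nonneg.2 ha1)
  have hlin : ConvexOn ℝ (Ioi 0) fun x : ℝ => (-r) * x :=
    (LinearMap.mulLeft ℝ (-r)).convexOn (convex_Ioi 0)
  refine ((hlog.add hlin).add_const (Real.log (r ^ a / Real.Gamma a))).congr fun x hx => ?_
  have hx0 : 0 < x := hx
  have : 0 < Real.Gamma a := Real.Gamma_pos_of_pos ha
  rw [gammaPDFReal, if_pos hx0.le, Real.log_mul (by positivity) (by positivity),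
    Real.log_mul (by positivity) (by positivity), Real.log_exp, Real.log_rpow hx0]
  simp only [Pi.add_apply, Pi.neg_apply, smul_eq_mul]
  ring

end GammaDensity

section DoubleGamma

open Set Filter ProbabilityTheory

variable {c lam mu T x : ℝ}

lemma lamMinus_pos (hmu : 0 < mu) (hmu2lam : mu < 2 * lam) : 0 < lamMinus lam mu := by
  rw [lamMinus, sub_pos, lt_div_iff₀ hmu]
  linarith

lemma lamMinus_add_one (lam mu : ℝ) : lamMinus lam mu + 1 = lamPlus lam mu := by
  rw [lamMinus, lamPlus]
  ring

lemma one_lt_lamPlus (hmu : 0 < mu) (hmu2lam : mu < 2 * lam) : 1 < lamPlus lam mu := by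
  linarith [lamMinus_pos hmu hmu2lam, lamMinus_add_one lam mu]

lemma mixA_pos (c T : ℝ) (hmu : 0 < mu) (hmu2lam : mu < 2 * lam) : 0 < mixA c lam mu T := by
  have : 0 < 2 * lam := hmu.trans hmu2lam
  rw [mixA]
  positivity

lemma mixB_pos (c T : ℝ) (hmu : 0 < mu) (hmu2lam : mu < 2 * lam) : 0 < mixB c lam mu T :=
  Real.rpow_pos_of_pos (sub_pos.2 ((div_lt_one (hmu.trans hmu2lam)).2 hmu2lam)) _

lemma mixB_div_mixA (c T : ℝ) (hmu : 0 < mu) (hmu2lam : mu < 2 * lam) :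
    mixB c lam mu T / mixA c lam mu T = (lamMinus lam mu / lamPlus lam mu) ^ (c * T) := by
  have hlam : 0 < 2 * lam := hmu.trans hmu2lam
  have hlam' : lam ≠ 0 := by linarith
  rw [mixA, mixB, ← Real.div_rpow (sub_nonneg.2 ((div_lt_one hlam).2 hmu2lam).le) (by positivity),
    lamMinus, lamPlus]
  congr 1
  field_simp

lemma doubleGamma_of_neg (hx : x < 0) :
    doubleGamma c lam mu T x = mixA c lam mu T / (mixA c lam mu T + mixB c lam mu T) *
      gammaPDFReal (c * T) (lamMinus lam mu) (-x) := by
  rw [doubleGamma, if_pos hx, gammaPDFReal, if_pos (neg_nonneg.2 hx.le), mul_neg, neg_neg]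
  ring

lemma doubleGamma_of_pos (hx : 0 < x) :
    doubleGamma c lam mu T x = mixB c lam mu T / (mixA c lam mu T + mixB c lam mu T) *
      gammaPDFReal (c * T) (lamPlus lam mu) x := by
  rw [doubleGamma, if_neg hx.not_gt, if_pos hx, gammaPDFReal, if_pos hx.le, neg_mul]
  ring

lemma doubleGamma_ae_eq (c lam mu T : ℝ) :
    doubleGamma c lam mu T =ᵐ[volume] fun x =>
      mixA c lam mu T / (mixA c lam mu T + mixB c lam mu T) *
        gammaPDFReal (c * T) (lamMinus lam mu) (-x) +
      mixB c lam mu T / (mixA c lam mu T + mixB c lam mu T) *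
        gammaPDFReal (c * T) (lamPlus lam mu) x := by
  filter_upwards [measure_eq_zero_iff_ae_notMem.1 (measure_singleton (0 : ℝ))] with x hx
  rcases lt_or_gt_of_ne hx with hneg | hpos
  · rw [doubleGamma_of_neg hneg, gammaPDFReal_of_neg hneg, mul_zero, add_zero]
  · rw [doubleGamma_of_pos hpos, gammaPDFReal_of_neg (neg_neg_of_pos hpos), mul_zero, zero_add]

lemma exp_mul_doubleGamma_ae_eq (c lam mu T : ℝ) :
    (fun x => Real.exp x * doubleGamma c lam mu T x) =ᵐ[volume] fun x =>
      mixA c lam mu T / (mixA c lam mu T + mixB c lam mu T) *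
        (Real.exp (-1 * -x) * gammaPDFReal (c * T) (lamMinus lam mu) (-x)) +
      mixB c lam mu T / (mixA c lam mu T + mixB c lam mu T) *
        (Real.exp (1 * x) * gammaPDFReal (c * T) (lamPlus lam mu) x) := by
  filter_upwards [doubleGamma_ae_eq c lam mu T] with x hx
  rw [hx, neg_one_mul, neg_neg, one_mul]
  ring

lemma doubleGamma_pos (hcT : 0 < c * T) (hmu : 0 < mu) (hmu2lam : mu < 2 * lam) (hx : x ≠ 0) :
    0 < doubleGamma c lam mu T x := by
  have hA := mixA_pos c T hmu hmu2lam
  have hB := mixB_pos c T hmu hmu2lam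
  rcases hx.lt_or_gt with hneg | hpos
  · rw [doubleGamma_of_neg hneg]
    exact mul_pos (by positivity)
      (gammaPDFReal_pos hcT (lamMinus_pos hmu hmu2lam) (neg_pos.2 hneg))
  · rw [doubleGamma_of_pos hpos]
    exact mul_pos (by positivity)
      (gammaPDFReal_pos hcT (zero_lt_one.trans (one_lt_lamPlus hmu hmu2lam)) hpos)

lemma integrable_doubleGamma (hcT : 0 < c * T) (hmu : 0 < mu) (hmu2lam : mu < 2 * lam) :
    Integrable (doubleGamma c lam mu T) := by
  rw [integrable_congr (doubleGamma_ae_eq c lam mu T)]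
  exact ((integrable_gammaPDFReal hcT (lamMinus_pos hmu hmu2lam)).comp_neg.const_mul _).add
    ((integrable_gammaPDFReal hcT
      (zero_lt_one.trans (one_lt_lamPlus hmu hmu2lam))).const_mul _)

lemma integrable_exp_mul_doubleGamma (hcT : 0 < c * T) (hmu : 0 < mu) (hmu2lam : mu < 2 * lam) :
    Integrable fun x => Real.exp x * doubleGamma c lam mu T x := by
  have hlam := one_lt_lamPlus hmu hmu2lam
  have hlam' := lamMinus_pos hmu hmu2lam
  rw [integrable_congr (exp_mul_doubleGamma_ae_eq c lam mu T)]
  exact ((integrable_exp_mul_gammaPDFReal hcT hlam' (by linarith)).comp_neg.const_mul _).add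
    ((integrable_exp_mul_gammaPDFReal hcT (zero_lt_one.trans hlam) hlam).const_mul _)

lemma integral_exp_mul_doubleGamma (hcT : 0 < c * T) (hmu : 0 < mu) (hmu2lam : mu < 2 * lam) :
    ∫ x, Real.exp x * doubleGamma c lam mu T x = 1 := by
  have hplus := one_lt_lamPlus hmu hmu2lam
  have hminus := lamMinus_pos hmu hmu2lam
  have hA := mixA_pos c T hmu hmu2lam
  have hB := mixB_pos c T hmu hmu2lam
  have hleft : ∫ x, Real.exp (-1 * -x) * gammaPDFReal (c * T) (lamMinus lam mu) (-x)
      = mixB c lam mu T / mixA c lam mu T := by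
    rw [integral_neg_eq_self fun x => Real.exp (-1 * x) * gammaPDFReal (c * T) (lamMinus lam mu) x,
      integral_exp_mul_gammaPDFReal hcT hminus (by linarith), sub_neg_eq_add, lamMinus_add_one,
      mixB_div_mixA c T hmu hmu2lam]
  have hright : ∫ x, Real.exp (1 * x) * gammaPDFReal (c * T) (lamPlus lam mu) x
      = mixA c lam mu T / mixB c lam mu T := by
    rw [integral_exp_mul_gammaPDFReal hcT (zero_lt_one.trans hplus) hplus, ← lamMinus_add_one,
      add_sub_cancel_right, lamMinus_add_one, ← inv_div (mixB _ _ _ _),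
      mixB_div_mixA c T hmu hmu2lam, ← Real.inv_rpow (by positivity), inv_div]
  rw [integral_congr_ae (exp_mul_doubleGamma_ae_eq c lam mu T), integral_add, integral_const_mul,
    integral_const_mul, hleft, hright]
  · field_simp
    ring
  · exact (integrable_exp_mul_gammaPDFReal hcT hminus (by linarith)).comp_neg.const_mul _
  · exact (integrable_exp_mul_gammaPDFReal hcT (zero_lt_one.trans hplus) hplus).const_mul _

lemma convexOn_log_doubleGamma_Iio (hcT : 0 < c * T) (hcT1 : c * T ≤ 1) (hmu : 0 < mu)
    (hmu2lam : mu < 2 * lam) : ConvexOn ℝ (Iio 0) fun x => Real.log (doubleGamma c lam mu T x) := by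
  have hA := mixA_pos c T hmu hmu2lam
  have hB := mixB_pos c T hmu hmu2lam
  have hlam := lamMinus_pos hmu hmu2lam
  have hgamma := ((convexOn_log_gammaPDFReal hcT hcT1 hlam).comp_linearMap
    (-LinearMap.id)).add_const (Real.log (mixA c lam mu T / (mixA c lam mu T + mixB c lam mu T)))
  have hIio : Iio (0 : ℝ) = (-LinearMap.id : ℝ →ₗ[ℝ] ℝ) ⁻¹' Ioi 0 := by
    ext x
    simp
  rw [hIio]
  refine hgamma.congr fun x hx => ?_
  have hx0 : x < 0 := neg_pos.1 hx
  rw [doubleGamma_of_neg hx0, Real.log_mul (by positivity)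
    (gammaPDFReal_pos hcT hlam (neg_pos.2 hx0)).ne', add_comm]
  rfl

lemma convexOn_log_doubleGamma_Ioi (hcT : 0 < c * T) (hcT1 : c * T ≤ 1) (hmu : 0 < mu)
    (hmu2lam : mu < 2 * lam) : ConvexOn ℝ (Ioi 0) fun x => Real.log (doubleGamma c lam mu T x) := by
  have hA := mixA_pos c T hmu hmu2lam
  have hB := mixB_pos c T hmu hmu2lam
  have hlam := zero_lt_one.trans (one_lt_lamPlus hmu hmu2lam)
  refine ((convexOn_log_gammaPDFReal hcT hcT1 hlam).add_const
    (Real.log (mixB c lam mu T / (mixA c lam mu T + mixB c lam mu T)))).congr fun x hx => ?_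
  rw [doubleGamma_of_pos hx, Real.log_mul (by positivity) (gammaPDFReal_pos hcT hlam hx).ne',
    add_comm]
  rfl

end DoubleGamma

theorem doubleGamma_no_W_shape_of_cT_lt_one_general (c lam mu T : ℝ) (hcT : 0 < c * T)
    (hcT1 : c * T ≤ 1) (hmu : 0 < mu) (hmu2lam : mu < 2 * lam) (σ0 : ℝ → ℝ)
    (hσ0_pos : ∀ K, 0 < K → 0 < σ0 K)
    (hIV : ∀ K, 0 < K → callPrice (doubleGamma c lam mu T) K = callBS K (σ0 K)) :
    ∀ σstar : ℝ, 0 < σstar →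
      ¬∃ K0 K1 K2 K3 K4 : ℝ, 0 < K0 ∧ K0 < K1 ∧ K1 < K2 ∧ K2 < K3 ∧ K3 < K4 ∧
        σstar < σ0 K0 ∧ σ0 K1 < σstar ∧ σstar < σ0 K2 ∧ σ0 K3 < σstar ∧
        σstar < σ0 K4 :=
  fun _ => impliedVol_no_W_shape_of_convexOn_log (integrable_doubleGamma hcT hmu hmu2lam)
    (integrable_exp_mul_doubleGamma hcT hmu hmu2lam) (integral_exp_mul_doubleGamma hcT hmu hmu2lam)
    (convexOn_log_doubleGamma_Iio hcT hcT1 hmu hmu2lam)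
    (convexOn_log_doubleGamma_Ioi hcT hcT1 hmu hmu2lam)
    (fun _ => doubleGamma_pos hcT hmu hmu2lam) hσ0_pos hIV

/-- **No W-shape for `cT < 1`:** the implied volatility curve of the double gamma model
cannot exhibit the sign pattern `+,−,+,−,+` around any level `σ_* > 0`. -/
theorem doubleGamma_no_W_shape_of_cT_lt_one
    (c lam mu T : ℝ)
    (hc : 0 < c) (hlam : 0 < lam) (hmu : 0 < mu) (hT : 0 < T)
    (hmu2lam : mu < 2 * lam) (hcT : c * T < 1)
    (σ0 : ℝ → ℝ)
    (hσ0_cont : ContinuousOn σ0 (Set.Ioi 0))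
    (hσ0_pos : ∀ K, 0 < K → 0 < σ0 K)
    (hIV : ∀ K, 0 < K → callPrice (doubleGamma c lam mu T) K = callBS K (σ0 K)) :
    ∀ σstar : ℝ, 0 < σstar →
      ¬∃ K0 K1 K2 K3 K4 : ℝ, 0 < K0 ∧ K0 < K1 ∧ K1 < K2 ∧ K2 < K3 ∧ K3 < K4 ∧
        σstar < σ0 K0 ∧ σ0 K1 < σstar ∧ σstar < σ0 K2 ∧ σ0 K3 < σstar ∧
        σstar < σ0 K4 := by
  exact doubleGamma_no_W_shape_of_cT_lt_one_general c lam mu T (mul_pos hc hT) hcT.le hmu hmu2lam σ0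
    hσ0_pos hIV
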